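/- (Power balance of the Euler–Bernoulli beam with distributed force.) Let $\rho A, EI > 0$ be constants, $L>0$, let $f:\mathbb{R}\times[0,L]\to\mathbb{R}$ be smooth, and let $w:\mathbb{R}\times[0,L]\to\mathbb{R}$ be a smooth solution of $\rho A\,\ddot{w} = -EI\,w_{[4]} + f$ satisfying the free-end boundary conditions $w_{[2]}(t,0) = w_{[3]}(t,0) = w_{[2]}(t,L) = w_{[3]}(t,L) = 0$ for all $t$. Then the total energy $\mathscr{H}(t) = \int_0^L\Big(\frac{\rho A}{2}\dot{w}^2 + \frac{EI}{2}w_{[2]}^2\Big)dz$ satisfies $\frac{d\mathscr{H}}{dt}(t) = \int_0^L f(t,z)\,\dot{w}(t,z)\,dz$ for all $t$. -/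

import Mathlib

open MeasureTheory

/-- Time derivative of a field `f(t,z)`. -/
noncomputable def pT (f : ℝ → ℝ → ℝ) : ℝ → ℝ → ℝ := fun t z => deriv (fun s => f s z) t

/-- Spatial derivative of a field `f(t,z)`. -/
noncomputable def pZ (f : ℝ → ℝ → ℝ) : ℝ → ℝ → ℝ := fun t z => deriv (fun s => f t s) z

/-!
Write `e = ρA/2 ẇ² + EI/2 w_[2]²` for the energy density and `p = EI (w_[2] ẇ_[1] - w_[3] ẇ)`. Since
time and space derivatives of `w` commute, `ė = (ρA ẅ + EI w_[4]) ẇ + p_[1]`, and the beam equation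
turns the bracket into `f`. Integrating over the beam gives the power of `f` plus the difference of
the values of `p` at the two ends, where it vanishes if the ends are free.
-/

open Function (uncurry)

section ParametricIntegral

variable {𝕜 E : Type*} [RCLike 𝕜] [NormedAddCommGroup E] [NormedSpace ℝ E] [NormedSpace 𝕜 E]

theorem hasDerivAt_intervalIntegral_of_continuous_deriv {μ : Measure ℝ}
    [IsLocallyFiniteMeasure μ] {F F' : 𝕜 → ℝ → E} (hF : ∀ x, Continuous (F x))
    (hF' : Continuous (uncurry F')) (hFF' : ∀ x s, HasDerivAt (fun y => F y s) (F' x s) x)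
    (a b : ℝ) (x : 𝕜) :
    HasDerivAt (fun y => ∫ s in a..b, F y s ∂μ) (∫ s in a..b, F' x s ∂μ) x := by
  obtain ⟨C, hC⟩ := ((isCompact_closedBall x 1).prod
    (isCompact_uIcc (a := a) (b := b))).exists_bound_of_continuousOn hF'.continuousOn
  have hbound : ∀ s ∈ Set.uIoc a b, ∀ y ∈ Metric.closedBall x 1, ‖F' y s‖ ≤ C :=
    fun s hs y hy => hC (y, s) ⟨hy, Set.uIoc_subset_uIcc hs⟩
  exact (intervalIntegral.hasDerivAt_integral_of_dominated_loc_of_deriv_le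
    (Metric.closedBall_mem_nhds x one_pos)
    (.of_forall fun y => (hF y).aestronglyMeasurable)
    ((hF x).intervalIntegrable a b)
    (hF'.uncurry_left x).aestronglyMeasurable
    (.of_forall hbound) intervalIntegrable_const
    (.of_forall fun s _ y _ => hFF' y s)).2

end ParametricIntegral

section PartialDerivatives

variable {f : ℝ → ℝ → ℝ}

theorem hasDerivAt_pT (hf : Differentiable ℝ (uncurry f)) (t z : ℝ) :
    HasDerivAt (fun s => f s z) (pT f t z) t :=
  (hf.comp (by fun_prop : Differentiable ℝ fun s : ℝ => (s, z)) t).hasDerivAt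

theorem hasDerivAt_pZ (hf : Differentiable ℝ (uncurry f)) (t z : ℝ) :
    HasDerivAt (fun s => f t s) (pZ f t z) z :=
  (hf.comp (by fun_prop : Differentiable ℝ fun s : ℝ => (t, s)) z).hasDerivAt

theorem uncurry_pT_eq_fderiv (hf : Differentiable ℝ (uncurry f)) :
    uncurry (pT f) = fun q => fderiv ℝ (uncurry f) q (1, 0) := by
  ext ⟨t, z⟩
  exact ((hf (t, z)).hasFDerivAt.comp_hasDerivAt t
    ((hasDerivAt_id t).prodMk (hasDerivAt_const t z))).deriv

theorem uncurry_pZ_eq_fderiv (hf : Differentiable ℝ (uncurry f)) :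
    uncurry (pZ f) = fun q => fderiv ℝ (uncurry f) q (0, 1) := by
  ext ⟨t, z⟩
  exact ((hf (t, z)).hasFDerivAt.comp_hasDerivAt z
    ((hasDerivAt_const z t).prodMk (hasDerivAt_id z))).deriv

theorem contDiff_pT {m n : WithTop ℕ∞} (hf : ContDiff ℝ n (uncurry f)) (hmn : m + 1 ≤ n) :
    ContDiff ℝ m (uncurry (pT f)) := by
  rw [uncurry_pT_eq_fderiv ((hf.of_le (le_add_self.trans hmn)).differentiable one_ne_zero)]
  exact (hf.fderiv_right hmn).clm_apply contDiff_const

theorem contDiff_pZ {m n : WithTop ℕ∞} (hf : ContDiff ℝ n (uncurry f)) (hmn : m + 1 ≤ n) :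
    ContDiff ℝ m (uncurry (pZ f)) := by
  rw [uncurry_pZ_eq_fderiv ((hf.of_le (le_add_self.trans hmn)).differentiable one_ne_zero)]
  exact (hf.fderiv_right hmn).clm_apply contDiff_const

theorem pT_pZ_comm (hf : ContDiff ℝ 2 (uncurry f)) : pT (pZ f) = pZ (pT f) := by
  have hdf : Differentiable ℝ (uncurry f) := hf.differentiable two_ne_zero
  have hd2f : Differentiable ℝ (fderiv ℝ (uncurry f)) :=
    (hf.fderiv_right one_add_one_eq_two.le).differentiable one_ne_zero
  have hpT : Differentiable ℝ (uncurry (pT f)) :=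
    (contDiff_pT hf one_add_one_eq_two.le).differentiable one_ne_zero
  have hpZ : Differentiable ℝ (uncurry (pZ f)) :=
    (contDiff_pZ hf one_add_one_eq_two.le).differentiable one_ne_zero
  have hsymm (q : ℝ × ℝ) : IsSymmSndFDerivAt ℝ (uncurry f) q :=
    hf.contDiffAt.isSymmSndFDerivAt (by simp)
  suffices uncurry (pT (pZ f)) = uncurry (pZ (pT f)) from Function.uncurry_injective this
  ext q
  rw [uncurry_pT_eq_fderiv hpZ, uncurry_pZ_eq_fderiv hpT, uncurry_pT_eq_fderiv hdf,
    uncurry_pZ_eq_fderiv hdf]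
  simpa [fderiv_clm_apply (hd2f q) (differentiableAt_const _)] using (hsymm q).eq (1, 0) (0, 1)

theorem pT_pZ_pZ_comm (hf : ContDiff ℝ 3 (uncurry f)) : pT (pZ (pZ f)) = pZ (pZ (pT f)) := by
  rw [pT_pZ_comm (contDiff_pZ hf two_add_one_eq_three.le), pT_pZ_comm (hf.of_le (by norm_num))]

theorem hasDerivAt_intervalIntegral_pT (hf : ContDiff ℝ 1 (uncurry f)) (a b t : ℝ) :
    HasDerivAt (fun τ => ∫ z in a..b, f τ z) (∫ z in a..b, pT f t z) t :=
  hasDerivAt_intervalIntegral_of_continuous_deriv hf.continuous.uncurry_left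
    (contDiff_pT hf (zero_add 1).le).continuous
    (hasDerivAt_pT (hf.differentiable one_ne_zero)) a b t

theorem intervalIntegral_pZ (hf : ContDiff ℝ 1 (uncurry f)) (a b t : ℝ) :
    ∫ z in a..b, pZ f t z = f t b - f t a :=
  intervalIntegral.integral_eq_sub_of_hasDerivAt
    (fun z _ => hasDerivAt_pZ (hf.differentiable one_ne_zero) t z)
    (((contDiff_pZ hf (zero_add 1).le).continuous.uncurry_left t).intervalIntegrable a b)

end PartialDerivatives

section EulerBernoulliBeam

/-- Energy per unit length of an Euler–Bernoulli beam with deflection `w`: kinetic energy plus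
bending energy. -/
noncomputable def beamEnergyDensity (ρA EI : ℝ) (w : ℝ → ℝ → ℝ) : ℝ → ℝ → ℝ :=
  fun t z => ρA / 2 * (pT w t z) ^ 2 + EI / 2 * (pZ (pZ w) t z) ^ 2

/-- Power transmitted through the cross-section at `z`: bending moment times angular velocity plus
shear force times velocity. The sign is chosen so that a positive value is energy flowing in the
direction of decreasing `z`. -/
noncomputable def beamPowerFlux (EI : ℝ) (w : ℝ → ℝ → ℝ) : ℝ → ℝ → ℝ :=
  fun t z => EI * pZ (pZ w) t z * pZ (pT w) t z + -EI * pZ (pZ (pZ w)) t z * pT w t z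

variable {w : ℝ → ℝ → ℝ}

theorem contDiff_beamEnergyDensity (ρA EI : ℝ) {m n : WithTop ℕ∞}
    (hw : ContDiff ℝ n (uncurry w)) (hmn : m + 2 ≤ n) :
    ContDiff ℝ m (uncurry (beamEnergyDensity ρA EI w)) := by
  have hmn' : m + 1 + 1 ≤ n := by rwa [add_assoc, one_add_one_eq_two]
  have hw_t : ContDiff ℝ m (uncurry (pT w)) := (contDiff_pT hw hmn').of_le le_self_add
  have hw_zz : ContDiff ℝ m (uncurry (pZ (pZ w))) := contDiff_pZ (contDiff_pZ hw hmn') le_rfl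
  exact (contDiff_const.mul (hw_t.pow 2)).add (contDiff_const.mul (hw_zz.pow 2))

theorem contDiff_beamPowerFlux (EI : ℝ) {m n : WithTop ℕ∞}
    (hw : ContDiff ℝ n (uncurry w)) (hmn : m + 3 ≤ n) :
    ContDiff ℝ m (uncurry (beamPowerFlux EI w)) := by
  have hmn' : m + 1 + 1 + 1 ≤ n := by
    rwa [add_assoc, add_assoc, show (1 + (1 + 1) : WithTop ℕ∞) = 3 by norm_num]
  have hw_t : ContDiff ℝ (m + 1) (uncurry (pT w)) := (contDiff_pT hw hmn').of_le le_self_add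
  have hw_zz : ContDiff ℝ (m + 1) (uncurry (pZ (pZ w))) :=
    contDiff_pZ (contDiff_pZ hw hmn') le_rfl
  exact ((contDiff_const.mul (hw_zz.of_le le_self_add)).mul (contDiff_pZ hw_t le_rfl)).add
    ((contDiff_const.mul (contDiff_pZ hw_zz le_rfl)).mul (hw_t.of_le le_self_add))

theorem pT_beamEnergyDensity (ρA EI : ℝ) (hw : ContDiff ℝ 3 (uncurry w)) (t z : ℝ) :
    pT (beamEnergyDensity ρA EI w) t z =
      ρA * pT (pT w) t z * pT w t z + EI * pZ (pZ w) t z * pZ (pZ (pT w)) t z := by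
  have hw_t : Differentiable ℝ (uncurry (pT w)) :=
    (contDiff_pT hw two_add_one_eq_three.le).differentiable two_ne_zero
  have hw_zz : Differentiable ℝ (uncurry (pZ (pZ w))) :=
    (contDiff_pZ (contDiff_pZ hw two_add_one_eq_three.le) one_add_one_eq_two.le).differentiable
      one_ne_zero
  have hderiv := (((hasDerivAt_pT hw_t t z).pow 2).const_mul (ρA / 2)).add
    (((hasDerivAt_pT hw_zz t z).pow 2).const_mul (EI / 2))
  rw [← pT_pZ_pZ_comm hw]
  refine hderiv.deriv.trans ?_
  push_cast
  ring

theorem pZ_beamPowerFlux (EI : ℝ) (hw : ContDiff ℝ 4 (uncurry w)) (t z : ℝ) :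
    pZ (beamPowerFlux EI w) t z =
      EI * pZ (pZ w) t z * pZ (pZ (pT w)) t z - EI * pZ (pZ (pZ (pZ w))) t z * pT w t z := by
  have hw_t : ContDiff ℝ 2 (uncurry (pT w)) := contDiff_pT hw (by norm_num)
  have hw_tz : ContDiff ℝ 1 (uncurry (pZ (pT w))) := contDiff_pZ hw_t one_add_one_eq_two.le
  have hw_zz : ContDiff ℝ 2 (uncurry (pZ (pZ w))) :=
    contDiff_pZ (contDiff_pZ (m := 3) hw (by norm_num)) two_add_one_eq_three.le
  have hw_zzz : ContDiff ℝ 1 (uncurry (pZ (pZ (pZ w)))) :=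
    contDiff_pZ hw_zz one_add_one_eq_two.le
  have hderiv :=
    (((hasDerivAt_pZ (hw_zz.differentiable two_ne_zero) t z).const_mul EI).mul
      (hasDerivAt_pZ (hw_tz.differentiable one_ne_zero) t z)).add
    (((hasDerivAt_pZ (hw_zzz.differentiable one_ne_zero) t z).const_mul (-EI)).mul
      (hasDerivAt_pZ (hw_t.differentiable two_ne_zero) t z))
  refine hderiv.deriv.trans ?_
  ring

theorem pT_beamEnergyDensity_sub_pZ_beamPowerFlux (ρA EI : ℝ) (hw : ContDiff ℝ 4 (uncurry w))
    (t z : ℝ) :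
    pT (beamEnergyDensity ρA EI w) t z - pZ (beamPowerFlux EI w) t z =
      (ρA * pT (pT w) t z + EI * pZ (pZ (pZ (pZ w))) t z) * pT w t z := by
  rw [pT_beamEnergyDensity ρA EI (hw.of_le (by norm_num)), pZ_beamPowerFlux EI hw]
  ring

theorem statement11_general (ρA EI a b : ℝ) (f : ℝ → ℝ → ℝ) (hw : ContDiff ℝ 4 (uncurry w))
    (t : ℝ)
    (hpde : ∀ z ∈ Set.uIcc a b,
      ρA * pT (pT w) t z = -EI * pZ (pZ (pZ (pZ w))) t z + f t z) :
    HasDerivAt (fun τ => ∫ z in a..b, beamEnergyDensity ρA EI w τ z)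
      ((∫ z in a..b, f t z * pT w t z) + (beamPowerFlux EI w t b - beamPowerFlux EI w t a)) t := by
  have henergy : ContDiff ℝ 1 (uncurry (beamEnergyDensity ρA EI w)) :=
    contDiff_beamEnergyDensity ρA EI hw (by norm_num)
  have hflux : ContDiff ℝ 1 (uncurry (beamPowerFlux EI w)) :=
    contDiff_beamPowerFlux EI hw (by norm_num)
  have hlocal : ∀ z ∈ Set.uIcc a b, f t z * pT w t z =
      pT (beamEnergyDensity ρA EI w) t z - pZ (beamPowerFlux EI w) t z := fun z hz => by
    rw [pT_beamEnergyDensity_sub_pZ_beamPowerFlux ρA EI hw, hpde z hz]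
    ring
  have henergy_t : IntervalIntegrable (pT (beamEnergyDensity ρA EI w) t) volume a b :=
    ((contDiff_pT henergy (zero_add 1).le).continuous.uncurry_left t).intervalIntegrable a b
  have hflux_z : IntervalIntegrable (pZ (beamPowerFlux EI w) t) volume a b :=
    ((contDiff_pZ hflux (zero_add 1).le).continuous.uncurry_left t).intervalIntegrable a b
  rw [intervalIntegral.integral_congr hlocal, intervalIntegral.integral_sub henergy_t hflux_z,
    intervalIntegral_pZ hflux, sub_add_cancel]
  exact hasDerivAt_intervalIntegral_pT henergy a b t

end EulerBernoulliBeam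

/-- power balance of the Euler–Bernoulli beam with distributed force
input and free ends. -/
theorem statement11 (ρA EI L : ℝ) (hρA : 0 < ρA) (hEI : 0 < EI) (hL : 0 < L)
    (f : ℝ → ℝ → ℝ) (hf : ContDiff ℝ (⊤ : ℕ∞) (fun q : ℝ × ℝ => f q.1 q.2))
    (w : ℝ → ℝ → ℝ) (hw : ContDiff ℝ (⊤ : ℕ∞) (fun q : ℝ × ℝ => w q.1 q.2))
    -- the beam equation `ρA ẅ = -EI w_[4] + f` on `[0,L]`
    (hpde : ∀ t : ℝ, ∀ z ∈ Set.Icc (0:ℝ) L,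
      ρA * pT (pT w) t z = -EI * pZ (pZ (pZ (pZ w))) t z + f t z)
    -- free-end boundary conditions
    (hbc : ∀ t : ℝ,
      pZ (pZ w) t 0 = 0 ∧ pZ (pZ (pZ w)) t 0 = 0
      ∧ pZ (pZ w) t L = 0 ∧ pZ (pZ (pZ w)) t L = 0)
    (t : ℝ) :
    HasDerivAt
      (fun τ => ∫ z in (0:ℝ)..L,
        (ρA / 2 * (pT w τ z) ^ 2 + EI / 2 * (pZ (pZ w) τ z) ^ 2))
      (∫ z in (0:ℝ)..L, f t z * pT w t z) t := by
  simpa [beamEnergyDensity, beamPowerFlux, hbc t] using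
    statement11_general ρA EI 0 L f (contDiff_infty.1 hw 4) t
      (by simpa [Set.uIcc_of_le hL.le] using hpde t)
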